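/- Let M = (d, Q, δ) be a reset counter machine with states p_init, p_final ∈ Q, and let G(M) be the associated first-order grammar. Then p_final is reachable from the configuration (p_init, (0,…,0)) in M (i.e., (p_init,(0,…,0)) →* (p_final, m̄) for some m̄ ∈ ℕ^d) if and only if the terms A_{p_init}(⊥,…,⊥) and B_{p_init}(⊥,…,⊥) (each with 2d arguments ⊥) are NOT bisimilar in L_{G(M)}. -/

import Mathlib

/-!
Bisimilarity is read as a game between an attacker and a defender. A pair
`A_p(x̄), B_p(x̄)` whose arguments are powers of `I` encodes the configuration in which counter
`c_i` is the difference of the exponents in positions `2i` and `2i + 1` (counting from zero):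
an increment adds an `I` in the even position, a decrement adds an `I` in the odd position.

The attacker can only make progress by playing instructions. At a decrement instruction the only
useful attack is `A_p → A_(q,i)`, and the defender may answer with `B_(q,i,2)`, after which action
`a` leads to identical terms, while action `b` exposes `x_{2i}` against `x_{2i+1}`; since
`Iᵐ⊥ ∼ Iⁿ⊥` only for `m = n`, this answer is good exactly when the counter is zero. If the counter
is positive, the defender has to answer `B_(q,i,1)`, and action `a` carries out the decrement.
Hence the attacker can follow any legal run of the machine, and wins at `p_final`, where only the
`A` side has an `a`-transition (`not_bisim_of_reach`). Conversely, if `p_final` is unreachable, the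
pairs that the defender can maintain form a bisimulation (`DefenderPair`, `bisim_of_not_reach`).
-/

/-- First-order terms over a set `N` of function symbols (nonterminals);
variables `x_{i+1}` are represented as `var i`. -/
inductive FOTerm (N : Type) : Type
  | var : ℕ → FOTerm N
  | app : N → List (FOTerm N) → FOTerm N

/-- Substitution of terms for variables. -/
def FOTerm.subst {N : Type} (σ : ℕ → FOTerm N) : FOTerm N → FOTerm N
  | .var i => σ i
  | .app A ts => .app A (ts.attach.map fun ⟨t, _⟩ => t.subst σ)

/-- A first-order grammar: ranked nonterminals, actions, and root-rewriting rules;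
`Rule A a V` means the rule `A(x₁,…,x_{arity A}) →a V` is in the grammar. -/
structure Grammar where
  N : Type
  arity : N → ℕ
  Act : Type
  Rule : N → Act → FOTerm N → Prop

/-- The labelled transition system `L_G` induced by a grammar: each rule
`A(x₁,…,x_m) →a V` induces transitions `(A(x₁,…,x_m))σ →a Vσ` for all substitutions σ. -/
inductive Grammar.Step (G : Grammar) : FOTerm G.N → G.Act → FOTerm G.N → Prop
  | step (A : G.N) (a : G.Act) (V : FOTerm G.N) (σ : ℕ → FOTerm G.N) :
      G.Rule A a V →
      G.Step (.app A ((List.range (G.arity A)).map σ)) a (V.subst σ)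

/-- A (symmetric) bisimulation for the LTS `L_G`. -/
def Grammar.IsBisimulation (G : Grammar) (B : FOTerm G.N → FOTerm G.N → Prop) : Prop :=
  (∀ T U, B T U → B U T) ∧
  ∀ T U, B T U → ∀ a T', G.Step T a T' → ∃ U', G.Step U a U' ∧ B T' U'

/-- Bisimilarity: `T ∼ U` iff some bisimulation contains `(T, U)`. -/
def Grammar.Bisim (G : Grammar) (T U : FOTerm G.N) : Prop :=
  ∃ B, G.IsBisimulation B ∧ B T U

/-- Operations of a reset counter machine with `d` counters. -/
inductive RCMOp (d : ℕ) : Type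
  | inc : Fin d → RCMOp d
  | dec : Fin d → RCMOp d
  | reset : Fin d → RCMOp d

/-- A reset counter machine `M = (d, Q, δ)`. -/
structure RCM where
  d : ℕ
  Q : Type
  finQ : Finite Q
  δ : Q → RCMOp d → Q → Prop

/-- The step relation on configurations `(q, n̄) ∈ Q × ℕ^d` of an RCM. -/
inductive RCM.StepR (M : RCM) : (M.Q × (Fin M.d → ℕ)) → (M.Q × (Fin M.d → ℕ)) → Prop
  | inc {p q : M.Q} {i : Fin M.d} {n : Fin M.d → ℕ} :
      M.δ p (.inc i) q → M.StepR (p, n) (q, Function.update n i (n i + 1))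
  | dec {p q : M.Q} {i : Fin M.d} {n : Fin M.d → ℕ} :
      M.δ p (.dec i) q → 0 < n i → M.StepR (p, n) (q, Function.update n i (n i - 1))
  | reset {p q : M.Q} {i : Fin M.d} {n : Fin M.d → ℕ} :
      M.δ p (.reset i) q → M.StepR (p, n) (q, Function.update n i 0)

/-- `pfin` is reachable from configuration `c`: `c →* (pfin, m̄)` for some `m̄`. -/
def RCM.ReachesFinal (M : RCM) (pfin : M.Q) (c : M.Q × (Fin M.d → ℕ)) : Prop :=
  ∃ m : Fin M.d → ℕ, Relation.ReflTransGen M.StepR c (pfin, m)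

/-- Nonterminals of the grammar `G(M)`: unary `I`, nullary `bot`, and
`A_p, B_p, A_(p,i), B_(p,i,1), B_(p,i,2)` of arity `2d` for `p ∈ Q`, `1 ≤ i ≤ d`. -/
inductive GNT (Q : Type) (d : ℕ) : Type
  | I : GNT Q d
  | bot : GNT Q d
  | A : Q → GNT Q d
  | B : Q → GNT Q d
  | Ai : Q → Fin d → GNT Q d
  | B1 : Q → Fin d → GNT Q d
  | B2 : Q → Fin d → GNT Q d

def GNT.arity {Q : Type} {d : ℕ} : GNT Q d → ℕ
  | .I => 1
  | .bot => 0
  | _ => 2 * d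

/-- Actions of `G(M)`: the instructions of `M`, plus auxiliary actions `a` and `b`. -/
inductive GAct (Q : Type) (d : ℕ) : Type
  | instr : Q → RCMOp d → Q → GAct Q d
  | a : GAct Q d
  | b : GAct Q d

/-- The tuple of variables `x̄ = (x₁,…,x_{2d})`. -/
def xbar (Q : Type) (d : ℕ) : List (FOTerm (GNT Q d)) :=
  (List.range (2 * d)).map FOTerm.var

/-- The rules of the grammar `G(M)` (for final state `pfin`). -/
inductive GRule (M : RCM) (pfin : M.Q) :
    GNT M.Q M.d → GAct M.Q M.d → FOTerm (GNT M.Q M.d) → Prop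
  | irule : GRule M pfin .I .a (.var 0)
  | finrule : GRule M pfin (.A pfin) .a (.app .bot [])
  | incA {p q : M.Q} {i : Fin M.d} : M.δ p (.inc i) q →
      GRule M pfin (.A p) (.instr p (.inc i) q)
        (.app (.A q) ((xbar M.Q M.d).set (2 * (i : ℕ)) (.app .I [.var (2 * (i : ℕ))])))
  | incB {p q : M.Q} {i : Fin M.d} : M.δ p (.inc i) q →
      GRule M pfin (.B p) (.instr p (.inc i) q)
        (.app (.B q) ((xbar M.Q M.d).set (2 * (i : ℕ)) (.app .I [.var (2 * (i : ℕ))])))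
  | resetA {p q : M.Q} {i : Fin M.d} : M.δ p (.reset i) q →
      GRule M pfin (.A p) (.instr p (.reset i) q)
        (.app (.A q) (((xbar M.Q M.d).set (2 * (i : ℕ)) (.app .bot [])).set
          (2 * (i : ℕ) + 1) (.app .bot [])))
  | resetB {p q : M.Q} {i : Fin M.d} : M.δ p (.reset i) q →
      GRule M pfin (.B p) (.instr p (.reset i) q)
        (.app (.B q) (((xbar M.Q M.d).set (2 * (i : ℕ)) (.app .bot [])).set
          (2 * (i : ℕ) + 1) (.app .bot [])))
  | decA {p q : M.Q} {i : Fin M.d} : M.δ p (.dec i) q →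
      GRule M pfin (.A p) (.instr p (.dec i) q) (.app (.Ai q i) (xbar M.Q M.d))
  | decAB1 {p q : M.Q} {i : Fin M.d} : M.δ p (.dec i) q →
      GRule M pfin (.A p) (.instr p (.dec i) q) (.app (.B1 q i) (xbar M.Q M.d))
  | decAB2 {p q : M.Q} {i : Fin M.d} : M.δ p (.dec i) q →
      GRule M pfin (.A p) (.instr p (.dec i) q) (.app (.B2 q i) (xbar M.Q M.d))
  | decBB1 {p q : M.Q} {i : Fin M.d} : M.δ p (.dec i) q →
      GRule M pfin (.B p) (.instr p (.dec i) q) (.app (.B1 q i) (xbar M.Q M.d))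
  | decBB2 {p q : M.Q} {i : Fin M.d} : M.δ p (.dec i) q →
      GRule M pfin (.B p) (.instr p (.dec i) q) (.app (.B2 q i) (xbar M.Q M.d))
  | auxAa {p q : M.Q} {i : Fin M.d} : M.δ p (.dec i) q →
      GRule M pfin (.Ai q i) .a
        (.app (.A q) ((xbar M.Q M.d).set (2 * (i : ℕ) + 1) (.app .I [.var (2 * (i : ℕ) + 1)])))
  | auxB1a {p q : M.Q} {i : Fin M.d} : M.δ p (.dec i) q →
      GRule M pfin (.B1 q i) .a
        (.app (.B q) ((xbar M.Q M.d).set (2 * (i : ℕ) + 1) (.app .I [.var (2 * (i : ℕ) + 1)])))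
  | auxB2a {p q : M.Q} {i : Fin M.d} : M.δ p (.dec i) q →
      GRule M pfin (.B2 q i) .a
        (.app (.A q) ((xbar M.Q M.d).set (2 * (i : ℕ) + 1) (.app .I [.var (2 * (i : ℕ) + 1)])))
  | auxAb {p q : M.Q} {i : Fin M.d} : M.δ p (.dec i) q →
      GRule M pfin (.Ai q i) .b (.var (2 * (i : ℕ)))
  | auxB1b {p q : M.Q} {i : Fin M.d} : M.δ p (.dec i) q →
      GRule M pfin (.B1 q i) .b (.var (2 * (i : ℕ)))
  | auxB2b {p q : M.Q} {i : Fin M.d} : M.δ p (.dec i) q →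
      GRule M pfin (.B2 q i) .b (.var (2 * (i : ℕ) + 1))

/-- The grammar `G(M)` associated with an RCM `M` and final state `pfin`. -/
@[reducible] def GrammarOf (M : RCM) (pfin : M.Q) : Grammar where
  N := GNT M.Q M.d
  arity := GNT.arity
  Act := GAct M.Q M.d
  Rule := GRule M pfin

/-- `iterTerm I bot n` is the term `Iⁿ⊥`. -/
def iterTerm {N : Type} (I bot : N) : ℕ → FOTerm N
  | 0 => .app bot []
  | n + 1 => .app I [iterTerm I bot n]

/-- `Iⁿ⊥` in the grammar `G(M)`. -/
@[reducible] def ipow {Q : Type} {d : ℕ} (n : ℕ) : FOTerm (GNT Q d) :=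
  iterTerm GNT.I GNT.bot n

/-- The `2d`-tuple of arguments `(I^{n₁}⊥, I^{n'₁}⊥, …, I^{n_d}⊥, I^{n'_d}⊥)`. -/
def vterms {Q : Type} {d : ℕ} (n n' : Fin d → ℕ) : List (FOTerm (GNT Q d)) :=
  (List.finRange d).flatMap fun i => [ipow (n i), ipow (n' i)]

/-! ### Bisimilarity -/

lemma Grammar.Step.inv {G : Grammar} {T : FOTerm G.N} {a : G.Act} {T' : FOTerm G.N}
    (h : G.Step T a T') :
    ∃ X V σ, G.Rule X a V ∧ T = .app X ((List.range (G.arity X)).map σ) ∧ T' = V.subst σ := by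
  cases h with
  | step A a V σ h => exact ⟨A, V, σ, h, rfl, rfl⟩

lemma Grammar.Bisim.fwd {G : Grammar} {T U : FOTerm G.N} (h : G.Bisim T U) {a : G.Act}
    {T' : FOTerm G.N} (hs : G.Step T a T') : ∃ U', G.Step U a U' ∧ G.Bisim T' U' := by
  obtain ⟨B, hB, hTU⟩ := h
  obtain ⟨U', h1, h2⟩ := hB.2 _ _ hTU _ _ hs
  exact ⟨U', h1, B, hB, h2⟩

/-- A relation satisfying the transfer property in both directions is contained in bisimilarity,
even if it is not itself symmetric. -/
lemma Grammar.bisim_of_transfer {G : Grammar} (R : FOTerm G.N → FOTerm G.N → Prop)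
    (hf : ∀ T U, R T U → ∀ a T', G.Step T a T' → ∃ U', G.Step U a U' ∧ R T' U')
    (hb : ∀ T U, R T U → ∀ a U', G.Step U a U' → ∃ T', G.Step T a T' ∧ R T' U')
    {T U : FOTerm G.N} (h : R T U) : G.Bisim T U := by
  refine ⟨fun T U => R T U ∨ R U T, ⟨fun T U h => h.symm, ?_⟩, Or.inl h⟩
  rintro T U (h | h) a T' hs
  · obtain ⟨U', h1, h2⟩ := hf _ _ h _ _ hs
    exact ⟨U', h1, .inl h2⟩
  · obtain ⟨U', h1, h2⟩ := hb _ _ h _ _ hs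
    exact ⟨U', h1, .inr h2⟩

/-! ### Terms of the grammar of a reset counter machine -/

section Terms

variable {Q : Type} {d : ℕ}

/-- The term `X(I^{f 0}⊥, …, I^{f (2d-1)}⊥)`. Only the values of `f` below `2d` matter. -/
def tm (X : GNT Q d) (f : ℕ → ℕ) : FOTerm (GNT Q d) :=
  .app X ((List.range (2 * d)).map fun k => ipow (f k))

lemma subst_app {N : Type} (σ : ℕ → FOTerm N) (A : N) (ts : List (FOTerm N)) :
    (FOTerm.app A ts).subst σ = .app A (ts.map (FOTerm.subst σ)) := by
  simp [FOTerm.subst]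

lemma subst_var {N : Type} (σ : ℕ → FOTerm N) (k : ℕ) : (FOTerm.var k).subst σ = σ k := by
  simp [FOTerm.subst]

lemma map_subst_xbar (σ : ℕ → FOTerm (GNT Q d)) :
    (xbar Q d).map (FOTerm.subst σ) = (List.range (2 * d)).map σ := by
  simp [xbar, subst_var]

lemma set_map_range {α : Type} (m : ℕ) (g : ℕ → α) (k : ℕ) (v : α) :
    ((List.range m).map g).set k v = (List.range m).map (Function.update g k v) := by
  apply List.ext_getElem
  · simp
  · intro j h1 h2
    simp only [List.getElem_set, List.getElem_map, List.getElem_range, Function.update_apply]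
    simp [eq_comm]

lemma subst_inc (X : GNT Q d) (f : ℕ → ℕ) (k : ℕ) :
    (FOTerm.app X ((xbar Q d).set k (.app .I [.var k]))).subst (fun k => ipow (f k)) =
      tm X (Function.update f k (f k + 1)) := by
  rw [subst_app, List.map_set, map_subst_xbar, set_map_range, tm]
  congr 2
  funext j
  by_cases h : j = k
  · subst h; simp [subst_app, subst_var, ipow, iterTerm]
  · simp [h]

lemma subst_reset (X : GNT Q d) (f : ℕ → ℕ) (k l : ℕ) :
    (FOTerm.app X (((xbar Q d).set k (.app .bot [])).set l (.app .bot []))).subst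
        (fun k => ipow (f k)) =
      tm X (Function.update (Function.update f k 0) l 0) := by
  rw [subst_app, List.map_set, List.map_set, map_subst_xbar, set_map_range, set_map_range, tm]
  congr 2
  funext j
  by_cases h : j = l
  · subst h; simp [subst_app, ipow, iterTerm]
  · by_cases h' : j = k
    · subst h'; simp [h, subst_app, ipow, iterTerm]
    · simp [h, h']

lemma subst_xbar (X : GNT Q d) (f : ℕ → ℕ) :
    (FOTerm.app X (xbar Q d)).subst (fun k => ipow (f k)) = tm X f := by
  rw [subst_app, map_subst_xbar, tm]

end Terms

/-! ### Transitions -/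

section Steps

variable {M : RCM} {pfin : M.Q}

/-- The right-hand side of a rule only mentions variables allowed by the arity. -/
lemma subst_congr {X : GNT M.Q M.d} {l : GAct M.Q M.d} {V : FOTerm (GNT M.Q M.d)}
    (h : GRule M pfin X l V) {σ τ : ℕ → FOTerm (GNT M.Q M.d)}
    (hst : ∀ k < X.arity, σ k = τ k) : V.subst σ = V.subst τ := by
  have key : X.arity = 2 * M.d → (List.range (2 * M.d)).map σ = (List.range (2 * M.d)).map τ := by
    intro hX
    apply List.map_congr_left
    intro k hk
    exact hst k (by simpa [hX] using hk)
  cases h <;> simp only [GNT.arity, forall_const] at hst key <;>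
    simp only [subst_app, subst_var, List.map_set, map_subst_xbar, List.map_cons, List.map_nil,
      *] <;> first | done | (rename_i i _; simp [hst _ (show 2 * (i : ℕ) < 2 * M.d by omega),
        hst _ (show 2 * (i : ℕ) + 1 < 2 * M.d by omega)]) | simp [hst]

lemma step_tm {X : GNT M.Q M.d} (hX : X.arity = 2 * M.d) {f : ℕ → ℕ} {l : GAct M.Q M.d}
    {T' : FOTerm (GNT M.Q M.d)} :
    (GrammarOf M pfin).Step (tm X f) l T' ↔
      ∃ V, GRule M pfin X l V ∧ T' = V.subst (fun k => ipow (f k)) := by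
  constructor
  · intro h
    obtain ⟨Y, V, σ, hr, hT, rfl⟩ := h.inv
    simp only [tm, FOTerm.app.injEq] at hT
    obtain ⟨rfl, hT⟩ := hT
    refine ⟨V, hr, subst_congr hr fun k hk => ?_⟩
    change List.map _ _ = (List.range (GNT.arity X)).map σ at hT
    rw [hX] at hT hk
    exact (List.map_inj_left.mp hT k (by simpa using hk)).symm
  · rintro ⟨V, hr, rfl⟩
    have := Grammar.Step.step (G := GrammarOf M pfin) X l V (fun k => ipow (f k)) hr
    change (GrammarOf M pfin).Step (.app X ((List.range (GNT.arity X)).map _)) l _ at this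
    rwa [hX] at this

lemma not_step_ipow_zero {l : GAct M.Q M.d} {T' : FOTerm (GNT M.Q M.d)} :
    ¬ (GrammarOf M pfin).Step (ipow 0) l T' := by
  intro h
  obtain ⟨Y, V, σ, hr, hT, -⟩ := h.inv
  simp only [ipow, iterTerm, FOTerm.app.injEq] at hT
  obtain ⟨rfl, -⟩ := hT
  cases hr

lemma step_ipow_succ {n : ℕ} {l : GAct M.Q M.d} {T' : FOTerm (GNT M.Q M.d)} :
    (GrammarOf M pfin).Step (ipow (n + 1)) l T' ↔ l = .a ∧ T' = ipow n := by
  constructor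
  · intro h
    obtain ⟨Y, V, σ, hr, hT, rfl⟩ := h.inv
    simp only [ipow, iterTerm, FOTerm.app.injEq] at hT
    obtain ⟨rfl, hT⟩ := hT
    cases hr
    refine ⟨rfl, ?_⟩
    have hT' : [iterTerm GNT.I GNT.bot n] = (List.range 1).map σ := hT
    simp only [List.range_one, List.map_cons, List.map_nil, List.cons.injEq, and_true] at hT'
    rw [subst_var, ← hT']
  · rintro ⟨rfl, rfl⟩
    have := Grammar.Step.step (G := GrammarOf M pfin) .I .a (.var 0) (fun _ => ipow n) .irule
    rwa [subst_var] at this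

lemma ipow_inj_of_bisim {m n : ℕ} (h : (GrammarOf M pfin).Bisim (ipow m) (ipow n)) : m = n := by
  induction m generalizing n with
  | zero =>
    cases n with
    | zero => rfl
    | succ n =>
      obtain ⟨B, hB, hTU⟩ := h
      obtain ⟨U', h1, -⟩ := hB.2 _ _ (hB.1 _ _ hTU) _ _ (step_ipow_succ.2 ⟨rfl, rfl⟩)
      exact (not_step_ipow_zero h1).elim
  | succ m ih =>
    obtain ⟨U', h1, h2⟩ := h.fwd (step_ipow_succ.2 ⟨rfl, rfl⟩)
    cases n with
    | zero => exact (not_step_ipow_zero h1).elim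
    | succ n =>
      obtain ⟨-, rfl⟩ := step_ipow_succ.1 h1
      rw [ih h2]

end Steps

/-! ### Counter values encoded by exponents -/

/-- The counter values encoded by the exponents `f`. The subtraction is truncated, so this is
meaningful only under `Ok d f`. -/
def cnt (d : ℕ) (f : ℕ → ℕ) : Fin d → ℕ := fun i => f (2 * i) - f (2 * i + 1)

/-- The exponents `f` encode nonnegative counter values. -/
def Ok (d : ℕ) (f : ℕ → ℕ) : Prop := ∀ i : Fin d, f (2 * i + 1) ≤ f (2 * i)

section Counters

variable {d : ℕ} {f : ℕ → ℕ} (i : Fin d)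

lemma ok_inc (h : Ok d f) : Ok d (Function.update f (2 * i) (f (2 * i) + 1)) := by
  intro j
  have := h j
  have h2 : 2 * (j : ℕ) + 1 ≠ 2 * i := by omega
  by_cases hj : j = i
  · subst hj
    simp
    omega
  · have h1 : (j : ℕ) ≠ i := fun e => hj (Fin.ext e)
    simpa [h1, h2] using this

lemma cnt_inc (h : Ok d f) : cnt d (Function.update f (2 * i) (f (2 * i) + 1)) =
    Function.update (cnt d f) i (cnt d f i + 1) := by
  funext j
  by_cases hj : j = i
  · subst hj
    have := h j
    simp [cnt]
    omega
  · have h1 : (j : ℕ) ≠ i := fun e => hj (Fin.ext e)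
    have h2 : 2 * (j : ℕ) + 1 ≠ 2 * i := by omega
    simp [cnt, hj, h1, h2]

lemma ok_dec (h : Ok d f) (hi : f (2 * i + 1) < f (2 * i)) :
    Ok d (Function.update f (2 * i + 1) (f (2 * i + 1) + 1)) := by
  intro j
  have := h j
  by_cases hj : j = i
  · subst hj
    simp
    omega
  · have h1 : (j : ℕ) ≠ i := fun e => hj (Fin.ext e)
    have h2 : 2 * (j : ℕ) ≠ 2 * i + 1 := by omega
    simpa [h1, h2] using this

lemma cnt_dec : cnt d (Function.update f (2 * i + 1) (f (2 * i + 1) + 1)) =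
    Function.update (cnt d f) i (cnt d f i - 1) := by
  funext j
  by_cases hj : j = i
  · subst hj
    simp [cnt]
    omega
  · have h1 : (j : ℕ) ≠ i := fun e => hj (Fin.ext e)
    have h2 : 2 * (j : ℕ) ≠ 2 * i + 1 := by omega
    simp [cnt, hj, h1, h2]

lemma ok_reset (h : Ok d f) :
    Ok d (Function.update (Function.update f (2 * i) 0) (2 * i + 1) 0) := by
  intro j
  have := h j
  by_cases hj : j = i
  · subst hj
    simp
  · have h1 : (j : ℕ) ≠ i := fun e => hj (Fin.ext e)
    have h2 : 2 * (j : ℕ) ≠ 2 * i + 1 := by omega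
    have h3 : 2 * (j : ℕ) + 1 ≠ 2 * i := by omega
    simpa [h1, h2, h3] using this

lemma cnt_reset : cnt d (Function.update (Function.update f (2 * i) 0) (2 * i + 1) 0) =
    Function.update (cnt d f) i 0 := by
  funext j
  by_cases hj : j = i
  · subst hj
    simp [cnt]
  · have h1 : (j : ℕ) ≠ i := fun e => hj (Fin.ext e)
    have h2 : 2 * (j : ℕ) ≠ 2 * i + 1 := by omega
    have h3 : 2 * (j : ℕ) + 1 ≠ 2 * i := by omega
    simp [cnt, hj, h1, h2, h3]

end Counters

/-! ### Reachability gives a winning strategy for the attacker -/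

section Main

variable {M : RCM} {pfin : M.Q}

lemma not_bisim_of_reach {c : M.Q × (Fin M.d → ℕ)} {m : Fin M.d → ℕ}
    (h : Relation.ReflTransGen M.StepR c (pfin, m)) :
    ∀ f, Ok M.d f → c.2 = cnt M.d f →
      ¬ (GrammarOf M pfin).Bisim (tm (.A c.1) f) (tm (.B c.1) f) := by
  induction h using Relation.ReflTransGen.head_induction_on with
  | refl =>
    intro f _ _ hb
    obtain ⟨U', h1, -⟩ := hb.fwd ((step_tm rfl).2 ⟨_, .finrule, rfl⟩)
    obtain ⟨V, hr, -⟩ := (step_tm rfl).1 h1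
    cases hr
  | head hs _ ih =>
    intro f hf hc hb
    cases hs with
    | inc hδ =>
      obtain rfl := hc
      obtain ⟨U', h1, h2⟩ := hb.fwd ((step_tm rfl).2 ⟨_, .incA hδ, rfl⟩)
      obtain ⟨V, hr, rfl⟩ := (step_tm rfl).1 h1
      cases hr
      rw [subst_inc, subst_inc] at h2
      exact ih _ (ok_inc _ hf) (cnt_inc _ hf).symm h2
    | reset hδ =>
      obtain rfl := hc
      obtain ⟨U', h1, h2⟩ := hb.fwd ((step_tm rfl).2 ⟨_, .resetA hδ, rfl⟩)
      obtain ⟨V, hr, rfl⟩ := (step_tm rfl).1 h1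
      cases hr
      rw [subst_reset, subst_reset] at h2
      exact ih _ (ok_reset _ hf) (cnt_reset _).symm h2
    | @dec p q i n hδ hpos =>
      obtain rfl := hc
      have hlt : f (2 * i + 1) < f (2 * i) := by
        simp only [cnt] at hpos
        omega
      obtain ⟨U', h1, h2⟩ := hb.fwd ((step_tm rfl).2 ⟨_, .decA hδ, rfl⟩)
      obtain ⟨V, hr, rfl⟩ := (step_tm rfl).1 h1
      rw [subst_xbar] at h2
      cases hr with
      | decBB1 _ =>
        rw [subst_xbar] at h2
        obtain ⟨W, h3, h4⟩ := h2.fwd ((step_tm rfl).2 ⟨_, .auxAa hδ, rfl⟩)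
        obtain ⟨V, hr, rfl⟩ := (step_tm rfl).1 h3
        cases hr
        rw [subst_inc, subst_inc] at h4
        exact ih _ (ok_dec _ hf hlt) (cnt_dec _).symm h4
      | decBB2 _ =>
        rw [subst_xbar] at h2
        obtain ⟨W, h3, h4⟩ := h2.fwd ((step_tm rfl).2 ⟨_, .auxAb hδ, rfl⟩)
        obtain ⟨V, hr, rfl⟩ := (step_tm rfl).1 h3
        cases hr
        rw [subst_var, subst_var] at h4
        exact absurd (ipow_inj_of_bisim h4) (by omega)

/-! ### Unreachability gives a bisimulation -/

/-- The pairs of terms that the defender maintains when `p_final` is not reachable. -/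
inductive DefenderPair (M : RCM) (pfin : M.Q) :
    FOTerm (GNT M.Q M.d) → FOTerm (GNT M.Q M.d) → Prop
  | refl (T) : DefenderPair M pfin T T
  | AB {p f} : Ok M.d f → ¬ M.ReachesFinal pfin (p, cnt M.d f) →
      DefenderPair M pfin (tm (.A p) f) (tm (.B p) f)
  | B1 {q f} {i : Fin M.d} : Ok M.d f → f (2 * i + 1) < f (2 * i) →
      ¬ M.ReachesFinal pfin (q, Function.update (cnt M.d f) i (cnt M.d f i - 1)) →
      DefenderPair M pfin (tm (.Ai q i) f) (tm (.B1 q i) f)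
  | B2 {q f} {i : Fin M.d} : f (2 * i) = f (2 * i + 1) →
      DefenderPair M pfin (tm (.Ai q i) f) (tm (.B2 q i) f)

lemma not_reach_of_step {c c' : M.Q × (Fin M.d → ℕ)} (hs : M.StepR c c')
    (h : ¬ M.ReachesFinal pfin c) : ¬ M.ReachesFinal pfin c' :=
  fun ⟨m, hm⟩ => h ⟨m, .head hs hm⟩

lemma inv_inc {p q : M.Q} {f : ℕ → ℕ} {i : Fin M.d} (hδ : M.δ p (.inc i) q) (hf : Ok M.d f)
    (hn : ¬ M.ReachesFinal pfin (p, cnt M.d f)) :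
    DefenderPair M pfin (tm (.A q) (Function.update f (2 * i) (f (2 * i) + 1)))
      (tm (.B q) (Function.update f (2 * i) (f (2 * i) + 1))) :=
  .AB (ok_inc i hf) (by rw [cnt_inc i hf]; exact not_reach_of_step (.inc hδ) hn)

lemma inv_reset {p q : M.Q} {f : ℕ → ℕ} {i : Fin M.d} (hδ : M.δ p (.reset i) q)
    (hf : Ok M.d f)
    (hn : ¬ M.ReachesFinal pfin (p, cnt M.d f)) :
    DefenderPair M pfin (tm (.A q) (Function.update (Function.update f (2 * i) 0) (2 * i + 1) 0))
      (tm (.B q) (Function.update (Function.update f (2 * i) 0) (2 * i + 1) 0)) :=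
  .AB (ok_reset i hf) (by rw [cnt_reset i]; exact not_reach_of_step (.reset hδ) hn)

lemma inv_dec {q : M.Q} {f : ℕ → ℕ} {i : Fin M.d} (hf : Ok M.d f)
    (hlt : f (2 * i + 1) < f (2 * i))
    (hn : ¬ M.ReachesFinal pfin (q, Function.update (cnt M.d f) i (cnt M.d f i - 1))) :
    DefenderPair M pfin (tm (.A q) (Function.update f (2 * i + 1) (f (2 * i + 1) + 1)))
      (tm (.B q) (Function.update f (2 * i + 1) (f (2 * i + 1) + 1))) :=
  .AB (ok_dec i hf hlt) (by rwa [cnt_dec i])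

lemma inv_fwd (T U : FOTerm (GNT M.Q M.d)) (h : DefenderPair M pfin T U) (l : GAct M.Q M.d)
    (T' : FOTerm (GNT M.Q M.d)) (hs : (GrammarOf M pfin).Step T l T') :
    ∃ U', (GrammarOf M pfin).Step U l U' ∧ DefenderPair M pfin T' U' := by
  cases h with
  | refl => exact ⟨T', hs, .refl _⟩
  | @AB p f hf hn =>
    obtain ⟨V, hr, rfl⟩ := (step_tm rfl).1 hs
    cases hr with
    | finrule => exact (hn ⟨_, .refl⟩).elim
    | incA hδ =>
      refine ⟨_, (step_tm rfl).2 ⟨_, .incB hδ, rfl⟩, ?_⟩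
      rw [subst_inc, subst_inc]
      exact inv_inc hδ hf hn
    | resetA hδ =>
      refine ⟨_, (step_tm rfl).2 ⟨_, .resetB hδ, rfl⟩, ?_⟩
      rw [subst_reset, subst_reset]
      exact inv_reset hδ hf hn
    | decAB1 hδ => exact ⟨_, (step_tm rfl).2 ⟨_, .decBB1 hδ, rfl⟩, .refl _⟩
    | decAB2 hδ => exact ⟨_, (step_tm rfl).2 ⟨_, .decBB2 hδ, rfl⟩, .refl _⟩
    | @decA _ q i hδ =>
      -- The defender tests the counter and answers accordingly.
      rcases (hf i).lt_or_eq with hlt | heq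
      · refine ⟨_, (step_tm rfl).2 ⟨_, .decBB1 hδ, rfl⟩, ?_⟩
        rw [subst_xbar, subst_xbar]
        exact .B1 hf hlt (not_reach_of_step (.dec hδ (by simp only [cnt]; omega)) hn)
      · refine ⟨_, (step_tm rfl).2 ⟨_, .decBB2 hδ, rfl⟩, ?_⟩
        rw [subst_xbar, subst_xbar]
        exact .B2 heq.symm
  | @B1 q f i hf hlt hn =>
    obtain ⟨V, hr, rfl⟩ := (step_tm rfl).1 hs
    cases hr with
    | auxAa hδ =>
      refine ⟨_, (step_tm rfl).2 ⟨_, .auxB1a hδ, rfl⟩, ?_⟩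
      rw [subst_inc, subst_inc]
      exact inv_dec hf hlt hn
    | auxAb hδ => exact ⟨_, (step_tm rfl).2 ⟨_, .auxB1b hδ, rfl⟩, .refl _⟩
  | @B2 q f i heq =>
    obtain ⟨V, hr, rfl⟩ := (step_tm rfl).1 hs
    cases hr with
    | auxAa hδ => exact ⟨_, (step_tm rfl).2 ⟨_, .auxB2a hδ, rfl⟩, .refl _⟩
    | auxAb hδ =>
      refine ⟨_, (step_tm rfl).2 ⟨_, .auxB2b hδ, rfl⟩, ?_⟩
      rw [subst_var, subst_var, heq]
      exact .refl _

lemma inv_bwd (T U : FOTerm (GNT M.Q M.d)) (h : DefenderPair M pfin T U) (l : GAct M.Q M.d)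
    (U' : FOTerm (GNT M.Q M.d)) (hs : (GrammarOf M pfin).Step U l U') :
    ∃ T', (GrammarOf M pfin).Step T l T' ∧ DefenderPair M pfin T' U' := by
  cases h with
  | refl => exact ⟨U', hs, .refl _⟩
  | @AB p f hf hn =>
    obtain ⟨V, hr, rfl⟩ := (step_tm rfl).1 hs
    cases hr with
    | incB hδ =>
      refine ⟨_, (step_tm rfl).2 ⟨_, .incA hδ, rfl⟩, ?_⟩
      rw [subst_inc, subst_inc]
      exact inv_inc hδ hf hn
    | resetB hδ =>
      refine ⟨_, (step_tm rfl).2 ⟨_, .resetA hδ, rfl⟩, ?_⟩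
      rw [subst_reset, subst_reset]
      exact inv_reset hδ hf hn
    | decBB1 hδ => exact ⟨_, (step_tm rfl).2 ⟨_, .decAB1 hδ, rfl⟩, .refl _⟩
    | decBB2 hδ => exact ⟨_, (step_tm rfl).2 ⟨_, .decAB2 hδ, rfl⟩, .refl _⟩
  | @B1 q f i hf hlt hn =>
    obtain ⟨V, hr, rfl⟩ := (step_tm rfl).1 hs
    cases hr with
    | auxB1a hδ =>
      refine ⟨_, (step_tm rfl).2 ⟨_, .auxAa hδ, rfl⟩, ?_⟩
      rw [subst_inc, subst_inc]
      exact inv_dec hf hlt hn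
    | auxB1b hδ => exact ⟨_, (step_tm rfl).2 ⟨_, .auxAb hδ, rfl⟩, .refl _⟩
  | @B2 q f i heq =>
    obtain ⟨V, hr, rfl⟩ := (step_tm rfl).1 hs
    cases hr with
    | auxB2a hδ => exact ⟨_, (step_tm rfl).2 ⟨_, .auxAa hδ, rfl⟩, .refl _⟩
    | auxB2b hδ =>
      refine ⟨_, (step_tm rfl).2 ⟨_, .auxAb hδ, rfl⟩, ?_⟩
      rw [subst_var, subst_var, heq]
      exact .refl _

lemma bisim_of_not_reach {p : M.Q} {f : ℕ → ℕ} (hf : Ok M.d f)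
    (hn : ¬ M.ReachesFinal pfin (p, cnt M.d f)) :
    (GrammarOf M pfin).Bisim (tm (.A p) f) (tm (.B p) f) :=
  Grammar.bisim_of_transfer (DefenderPair M pfin) inv_fwd inv_bwd (.AB hf hn)

end Main

lemma app_replicate_bot {Q : Type} {d : ℕ} (X : GNT Q d) :
    FOTerm.app X (List.replicate (2 * d) (.app .bot [])) = tm X (fun _ => 0) := by
  simp [tm, ipow, iterTerm]

/-- `p_final` is reachable from `(p_init, (0,…,0))` in the RCM `M`
iff `A_{p_init}(⊥,…,⊥)` and `B_{p_init}(⊥,…,⊥)` are NOT bisimilar in `L_{G(M)}`. -/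
theorem rcm_reachability_iff_not_bisim (M : RCM) (pinit pfin : M.Q) :
    (∃ m : Fin M.d → ℕ,
        Relation.ReflTransGen M.StepR (pinit, fun _ => 0) (pfin, m)) ↔
      ¬ (GrammarOf M pfin).Bisim
          (.app (.A pinit) (List.replicate (2 * M.d) (.app .bot [])))
          (.app (.B pinit) (List.replicate (2 * M.d) (.app .bot []))) := by
  rw [app_replicate_bot, app_replicate_bot]
  constructor
  · rintro ⟨m, hm⟩
    exact not_bisim_of_reach hm (fun _ => 0) (fun _ => le_rfl) rfl
  · intro h
    by_contra hn
    exact h (bisim_of_not_reach (fun _ => le_rfl) hn)
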